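/- arXiv:1111.4493 — 7 statements merged into one kernel-verified Lean document; each statement's English description precedes it below -/
import Mathlib

section
/- Let k and n be positive integers with n ≥ 2k. If F is a family of k-element subsets of {1,…,n} such that every two members of F have nonempty intersection, then |F| ≤ C(n−1, k−1). Moreover, if n > 2k, then |F| = C(n−1, k−1) holds if and only if there exists an element x ∈ {1,…,n} such that F is exactly the family of all k-element subsets of {1,…,n} containing x. -/
open Finset

namespace ErdosKoRado

section Circle

variable {n : ℕ}

/-- The arc of `k` consecutive residues modulo `n` starting at `i`. -/
def arc (k : ℕ) (i : ZMod n) : Finset (ZMod n) :=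
  (range k).image fun j : ℕ => i + (j : ZMod n)

lemma mem_arc {k : ℕ} {i x : ZMod n} : x ∈ arc k i ↔ ∃ j < k, i + (j : ZMod n) = x := by
  simp [arc]

lemma natCast_inj_of_lt {a b : ℕ} (ha : a < n) (hb : b < n) (h : (a : ZMod n) = b) : a = b := by
  rw [ZMod.natCast_eq_natCast_iff'] at h
  rwa [Nat.mod_eq_of_lt ha, Nat.mod_eq_of_lt hb] at h

lemma card_arc {k : ℕ} (hk : k ≤ n) (i : ZMod n) : (arc k i).card = k := by
  rw [arc, card_image_of_injOn, card_range]
  intro a ha b hb hab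
  simp only [coe_range, Set.mem_Iio] at ha hb
  exact natCast_inj_of_lt (ha.trans_le hk) (hb.trans_le hk) (add_left_cancel hab)

lemma disjoint_arc {k t : ℕ} (hkt : k ≤ t) (htn : t + k ≤ n) (i : ZMod n) :
    Disjoint (arc k i) (arc k (i + t)) := by
  rw [Finset.disjoint_left]
  intro x hx hx'
  obtain ⟨a, ha, rfl⟩ := mem_arc.1 hx
  obtain ⟨b, hb, hab⟩ := mem_arc.1 hx'
  rw [add_assoc] at hab
  have := natCast_inj_of_lt (n := n) (a := t + b) (b := a) (by omega) (by omega)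
    (by push_cast; exact add_left_cancel hab)
  omega

lemma arc_inter_arc {k : ℕ} (hk : 0 < k) (hkn : 2 * k ≤ n) (i : ZMod n) :
    arc k i ∩ arc k (i + (k - 1 : ℕ)) = {i + ((k - 1 : ℕ) : ZMod n)} := by
  ext x
  rw [mem_inter, mem_singleton]
  constructor
  · rintro ⟨hx, hx'⟩
    obtain ⟨a, ha, rfl⟩ := mem_arc.1 hx
    obtain ⟨b, hb, hab⟩ := mem_arc.1 hx'
    rw [add_assoc] at hab
    have := natCast_inj_of_lt (n := n) (a := k - 1 + b) (b := a) (by omega) (by omega)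
      (by rw [Nat.cast_add]; exact add_left_cancel hab)
    rw [show a = k - 1 by omega]
  · rintro rfl
    exact ⟨mem_arc.2 ⟨k - 1, by omega, rfl⟩, mem_arc.2 ⟨0, hk, by simp⟩⟩

/-- No two members of `S` are the starting points of disjoint arcs of length `k`. -/
def NoDisjointArcs (k : ℕ) (S : Finset (ZMod n)) : Prop :=
  ∀ i ∈ S, ∀ t : ℕ, k ≤ t → t + k ≤ n → i + (t : ZMod n) ∉ S

/-- Position of `s` relative to `a`, where the starting points of the arcs ending just before
the arcs starting at `a + 1, …, a + k - 1` are identified with those starting points. -/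
def foldedPos (k : ℕ) (a s : ZMod n) : ℕ :=
  if (s - a).val < k then (s - a).val else (s - a).val - (n - k)

variable [NeZero n] {k : ℕ} {S : Finset (ZMod n)} {a : ZMod n}

lemma add_val_sub (a s : ZMod n) : a + ((s - a).val : ZMod n) = s := by
  rw [ZMod.natCast_zmod_val]; ring

lemma NoDisjointArcs.val_lt_or_lt (hS : NoDisjointArcs k S) (ha : a ∈ S) {s : ZMod n}
    (hs : s ∈ S) : (s - a).val < k ∨ n < (s - a).val + k := by
  by_contra! h
  exact hS a ha _ h.1 h.2 (by rwa [add_val_sub])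

lemma NoDisjointArcs.mapsTo_foldedPos (hS : NoDisjointArcs k S) (hkn : 2 * k ≤ n) (ha : a ∈ S) :
    Set.MapsTo (foldedPos k a) S (range k) := by
  intro s hs
  have := hS.val_lt_or_lt ha hs
  have := ZMod.val_lt (s - a)
  simp only [foldedPos, coe_range, Set.mem_Iio]
  split_ifs <;> omega

lemma NoDisjointArcs.injOn_foldedPos (hS : NoDisjointArcs k S) (hkn : 2 * k ≤ n) (ha : a ∈ S) :
    Set.InjOn (foldedPos k a) S := by
  have key : ∀ s ∈ S, ∀ s' ∈ S, (s - a).val + (n - k) ≠ (s' - a).val := by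
    intro s hs s' hs' h
    apply hS s hs (n - k) (by omega) (by omega)
    convert! hs'
    rw [← add_val_sub a s', ← h, Nat.cast_add, ← add_assoc, add_val_sub]
  intro s hs s' hs' h
  have h1 := hS.val_lt_or_lt ha hs
  have h2 := hS.val_lt_or_lt ha hs'
  have h3 := key s hs s' hs'
  have h4 := key s' hs' s hs
  have : (s - a).val = (s' - a).val := by
    simp only [foldedPos] at h
    split_ifs at h <;> omega
  rw [← add_val_sub a s, this, add_val_sub]

lemma NoDisjointArcs.card_le (hS : NoDisjointArcs k S) (hkn : 2 * k ≤ n) : S.card ≤ k := by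
  obtain rfl | ⟨a, ha⟩ := S.eq_empty_or_nonempty
  · simp
  · simpa using card_le_card_of_injOn _ (hS.mapsTo_foldedPos hkn ha) (hS.injOn_foldedPos hkn ha)

lemma NoDisjointArcs.add_mem_or (hS : NoDisjointArcs k S) (hkn : 2 * k ≤ n) (hcard : S.card = k)
    (ha : a ∈ S) {t : ℕ} (ht : t < k) :
    a + (t : ZMod n) ∈ S ∨ a + (t : ZMod n) - k ∈ S := by
  obtain ⟨s, hs, hst⟩ := surjOn_of_injOn_of_card_le _ (hS.mapsTo_foldedPos hkn ha)
    (hS.injOn_foldedPos hkn ha) (by simp [hcard]) (show t ∈ (range k : Set ℕ) by simpa using ht)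
  have hs' : s ∈ S := hs
  have h1 := hS.val_lt_or_lt ha hs'
  simp only [foldedPos] at hst
  split_ifs at hst with h
  · left
    rwa [← hst, add_val_sub]
  · right
    have : (s - a).val + k = t + n := by omega
    have := congrArg (Nat.cast : ℕ → ZMod n) this
    push_cast at this
    rw [ZMod.natCast_zmod_val, ZMod.natCast_self] at this
    convert! hs'
    linear_combination - this

/-- An extremal set of starting points is a block of consecutive residues. -/
lemma NoDisjointArcs.add_mem (hS : NoDisjointArcs k S) (hkn : 2 * k < n) (hcard : S.card = k)
    (ha : a ∈ S) (ha' : a - 1 ∉ S) {t : ℕ} (ht : t < k) : a + (t : ZMod n) ∈ S := by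
  suffices h : ∀ u t : ℕ, u + t + 1 = k → a + (t : ZMod n) ∈ S from
    h (k - 1 - t) t (by omega)
  intro u
  induction u with
  | zero =>
    intro t htk
    refine (hS.add_mem_or hkn.le hcard ha (by omega)).resolve_right fun h => ha' ?_
    convert! h using 1
    rw [← htk]; push_cast; ring
  | succ u ih =>
    intro t htk
    refine (hS.add_mem_or hkn.le hcard ha (by omega)).resolve_right fun h => ?_
    refine hS _ h (k + 1) (by omega) (by omega) ?_
    convert! ih (t + 1) (by omega) using 1
    push_cast; ring

end Circle

section Count

variable {α β : Type*} [Fintype α] [DecidableEq α] [Fintype β] [DecidableEq β]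

lemma card_equiv_map_eq (T : Finset β) {A B : Finset α} (h : A.card = B.card) :
    #{σ : β ≃ α | T.map σ.toEmbedding = A} = #{σ : β ≃ α | T.map σ.toEmbedding = B} := by
  obtain ⟨π, rfl⟩ : ∃ π : Equiv.Perm α, A.map π.toEmbedding = B := by
    let e : {x // x ∈ A} ≃ {x // x ∈ B} := Finset.equivOfCardEq h
    refine ⟨e.extendSubtype, eq_of_subset_of_card_le ?_ (by simp [h])⟩
    intro x hx
    obtain ⟨y, hy, rfl⟩ := mem_map.1 hx
    exact e.extendSubtype_mem y hy
  refine card_bij' (fun σ _ => σ.trans π) (fun σ _ => σ.trans π.symm) ?_ ?_ ?_ ?_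
  · intro σ hσ
    simp only [mem_filter, mem_univ, true_and] at hσ ⊢
    rw [← hσ, Finset.map_map]; rfl
  · intro σ hσ
    simp only [mem_filter, mem_univ, true_and] at hσ ⊢
    apply Finset.map_injective π.toEmbedding
    rw [← hσ, Finset.map_map]
    congr 1
    ext; simp
  · intro σ _; ext; simp
  · intro σ _; ext; simp

lemma choose_mul_card_equiv_map_mem (e : β ≃ α) (T : Finset β) (F : Finset (Finset α))
    (hF : ∀ s ∈ F, s.card = T.card) :
    (Fintype.card α).choose T.card * #{σ : β ≃ α | T.map σ.toEmbedding ∈ F} =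
      F.card * Fintype.card (β ≃ α) := by
  have fiber (G : Finset (Finset α)) (hG : ∀ s ∈ G, s.card = T.card) :
      #{σ : β ≃ α | T.map σ.toEmbedding ∈ G} =
        G.card * #{σ : β ≃ α | T.map σ.toEmbedding = T.map e.toEmbedding} := by
    rw [card_eq_sum_card_fiberwise (f := fun σ : β ≃ α => T.map σ.toEmbedding) (t := G)
      (by intro σ hσ; simpa using hσ), ← smul_eq_mul, ← sum_const]
    refine sum_congr rfl fun A hA => ?_
    rw [← card_equiv_map_eq T (A := A) (by simp [hG A hA]), filter_filter]
    congr 1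
    ext σ
    simp only [mem_filter, mem_univ, true_and, and_iff_right_iff_imp]
    rintro rfl
    exact hA
  have h := fiber (powersetCard T.card univ) (by simp)
  rw [filter_true_of_mem (by simp), card_univ, card_powersetCard, card_univ] at h
  rw [fiber F hF, h]
  ring

end Count

section Families

variable {n k : ℕ} [NeZero n] {α : Type*} [DecidableEq α] {F : Finset (Finset α)}

/-- The starting points of the arcs of length `k` that belong to `F` in the circular order `σ`. -/
def starts (k : ℕ) (F : Finset (Finset α)) (σ : ZMod n ≃ α) : Finset (ZMod n) :=
  {i | (arc k i).map σ.toEmbedding ∈ F}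

lemma mem_starts {σ : ZMod n ≃ α} {i : ZMod n} :
    i ∈ starts k F σ ↔ (arc k i).map σ.toEmbedding ∈ F := by
  simp [starts]

lemma noDisjointArcs_starts (hint : ∀ s ∈ F, ∀ t ∈ F, (s ∩ t).Nonempty) (σ : ZMod n ≃ α) :
    NoDisjointArcs k (starts k F σ) := by
  intro i hi t hkt htn hit
  rw [mem_starts] at hi hit
  have := hint _ hi _ hit
  rw [← map_inter, (disjoint_iff_inter_eq_empty.1 (disjoint_arc hkt htn i))] at this
  simp at this

/-- A duplicate-free enumeration of `α` as a circular order. -/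
lemma exists_equiv_map_arc_eq {l : List α} (hl : l.Nodup) (hmem : ∀ x, x ∈ l)
    (hlen : l.length = n) :
    ∃ σ : ZMod n ≃ α, ∀ u v w : List α, l = u ++ v ++ w →
      (arc v.length (u.length : ZMod n)).map σ.toEmbedding = v.toFinset := by
  subst hlen
  let f : ZMod l.length → α := fun i => l[i.val]'(ZMod.val_lt i)
  have hf : Function.Bijective f := by
    constructor
    · intro i j hij
      exact ZMod.val_injective _ ((hl.getElem_inj_iff).1 hij)
    · intro x
      obtain ⟨j, hj, rfl⟩ := List.mem_iff_getElem.1 (hmem x)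
      exact ⟨j, by simp only [f, ZMod.val_cast_of_lt hj]⟩
  let σ : ZMod l.length ≃ α := Equiv.ofBijective f hf
  have hσ (j : ℕ) (hj : j < l.length) : σ (j : ZMod l.length) = l[j] := by
    simp only [σ, Equiv.ofBijective_apply, f, ZMod.val_cast_of_lt hj]
  refine ⟨σ, ?_⟩
  intro u v w h
  have hget (j : ℕ) (hj : j < v.length) : σ ((u.length : ZMod l.length) + j) = v[j] := by
    rw [← Nat.cast_add, hσ _ (by simp [h]; omega)]
    simp [h, hj]
  ext x
  simp only [mem_map, mem_arc, List.mem_toFinset, List.mem_iff_getElem]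
  constructor
  · rintro ⟨_, ⟨j, hj, rfl⟩, rfl⟩
    exact ⟨j, hj, (hget j hj).symm⟩
  · rintro ⟨j, hj, rfl⟩
    exact ⟨_, ⟨j, hj, rfl⟩, hget j hj⟩

variable [Fintype α]

/-- In an intersecting family of extremal size, every circular order has exactly `k` arcs. -/
lemma card_starts (hk : 0 < k) (hkn : 2 * k ≤ n) (hα : Fintype.card α = n)
    (hcard : ∀ s ∈ F, s.card = k) (hint : ∀ s ∈ F, ∀ t ∈ F, (s ∩ t).Nonempty)
    (hF : F.card = (n - 1).choose (k - 1)) (σ : ZMod n ≃ α) : (starts k F σ).card = k := by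
  have hle : ∀ τ ∈ (univ : Finset (ZMod n ≃ α)), (starts k F τ).card ≤ k :=
    fun τ _ => (noDisjointArcs_starts hint τ).card_le hkn
  have hsum : ∑ τ : ZMod n ≃ α, (starts k F τ).card = ∑ _τ : ZMod n ≃ α, k := by
    have hswap : ∑ τ : ZMod n ≃ α, (starts k F τ).card =
        ∑ i : ZMod n, #{τ : ZMod n ≃ α | (arc k i).map τ.toEmbedding ∈ F} := by
      simp only [starts, card_filter]
      exact sum_comm
    have hch : n * (n - 1).choose (k - 1) = n.choose k * k := by
      have := Nat.add_one_mul_choose_eq (n - 1) (k - 1)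
      rwa [Nat.sub_add_cancel hk, Nat.sub_add_cancel (by omega)] at this
    apply Nat.eq_of_mul_eq_mul_left (Nat.choose_pos (show k ≤ n by omega))
    have hfib (i : ZMod n) : n.choose k * #{τ : ZMod n ≃ α | (arc k i).map τ.toEmbedding ∈ F} =
        F.card * Fintype.card (ZMod n ≃ α) := by
      have hki := card_arc (show k ≤ n by omega) i
      have := choose_mul_card_equiv_map_mem σ (arc k i) F (by rwa [hki])
      rwa [hki, hα] at this
    rw [hswap, mul_sum, sum_congr rfl fun i _ => hfib i, sum_const, card_univ, ZMod.card,
      sum_const, card_univ, smul_eq_mul, smul_eq_mul, ← mul_assoc, hF, hch]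
    ring
  exact (sum_eq_sum_iff_of_le hle).1 hsum σ (mem_univ σ)

/-- If two members of an extremal family meet only in `x`, then every `k`-set containing `x` that
misses a point outside both of them is a member. -/
lemma mem_of_inter_eq_singleton (hkn : 2 * k < n) (hα : Fintype.card α = n)
    (hcard : ∀ s ∈ F, s.card = k) (hint : ∀ s ∈ F, ∀ t ∈ F, (s ∩ t).Nonempty)
    (hF : F.card = (n - 1).choose (k - 1)) {A B S : Finset α} {x z : α}
    (hA : A ∈ F) (hB : B ∈ F) (hAB : A ∩ B = {x}) (hzA : z ∉ A) (hzB : z ∉ B)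
    (hS : S.card = k) (hxS : x ∈ S) (hzS : z ∉ S) : S ∈ F := by
  have hxAB : x ∈ A ∩ B := by simp [hAB]
  have hxA := (mem_inter.1 hxAB).1
  have hk : 0 < k := by
    rw [← hS]
    exact card_pos.2 ⟨x, hxS⟩
  obtain ⟨P, hP⟩ : ∃ P, P = A \ S := ⟨_, rfl⟩
  obtain ⟨Q, hQ⟩ : ∃ Q, Q = (A ∩ S).erase x := ⟨_, rfl⟩
  obtain ⟨G, hG⟩ : ∃ G, G = S \ A := ⟨_, rfl⟩
  obtain ⟨R, hR⟩ : ∃ R, R = univ \ insert z (A ∪ S) := ⟨_, rfl⟩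
  have hPcard : P.card + (Q.card + 1) = k := by
    rw [hP, hQ, card_erase_add_one (mem_inter.2 ⟨hxA, hxS⟩), card_sdiff_add_card_inter, hcard A hA]
  have hGcard : G.card + (Q.card + 1) = k := by
    rw [hG, hQ, card_erase_add_one (mem_inter.2 ⟨hxA, hxS⟩), inter_comm,
      card_sdiff_add_card_inter, hS]
  obtain ⟨l, hl⟩ : ∃ l, l = z :: (P.toList ++ (Q.toList ++ (x :: (G.toList ++ R.toList)))) :=
    ⟨_, rfl⟩
  have hnodup : l.Nodup := by
    simp only [hl, List.nodup_cons, List.nodup_append', Finset.nodup_toList, List.disjoint_left,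
      List.mem_append, List.mem_cons, Finset.mem_toList]
    grind
  have hmem (y : α) : y ∈ l := by
    simp only [hl, List.mem_append, List.mem_cons, Finset.mem_toList]
    grind
  have hlen : l.length = n := by
    rw [← hα, ← List.toFinset_card_of_nodup hnodup, ← card_univ]
    congr 1
    ext y
    simp [hmem]
  obtain ⟨σ, hσ⟩ := exists_equiv_map_arc_eq hnodup hmem hlen
  have hfirst := hσ [] (z :: (P.toList ++ Q.toList)) (x :: (G.toList ++ R.toList)) (by simp [hl])
  have hsecond := hσ [z] (P.toList ++ (Q.toList ++ [x])) (G.toList ++ R.toList) (by simp [hl])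
  have hlast := hσ (z :: P.toList) (Q.toList ++ (x :: G.toList)) R.toList (by simp [hl])
  rw [show (z :: (P.toList ++ Q.toList)).length = k by simp; omega] at hfirst
  rw [show (P.toList ++ (Q.toList ++ [x])).length = k by simp; omega,
    show (P.toList ++ (Q.toList ++ [x])).toFinset = A by ext y; simp; grind] at hsecond
  rw [show (Q.toList ++ (x :: G.toList)).length = k by simp; omega,
    show (Q.toList ++ (x :: G.toList)).toFinset = S by ext y; simp; grind] at hlast
  have h1 : (1 : ZMod n) ∈ starts k F σ := by
    rw [mem_starts]
    simp only [List.length_singleton, Nat.cast_one] at hsecond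
    rwa [hsecond]
  have h0 : (1 : ZMod n) - 1 ∉ starts k F σ := by
    rw [mem_starts, sub_self]
    simp only [List.length_nil, Nat.cast_zero] at hfirst
    rw [hfirst]
    intro hmemF
    obtain ⟨y, hy⟩ := hint _ hmemF _ hB
    have : y ∈ A → y ∈ B → y = x := fun h h' => by
      have : y ∈ A ∩ B := mem_inter.2 ⟨h, h'⟩
      simpa [hAB] using this
    simp at hy
    grind
  have := (noDisjointArcs_starts hint σ).add_mem hkn
    (card_starts hk hkn.le hα hcard hint hF σ) h1 h0 (show P.card < k by omega)
  rw [mem_starts] at this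
  rw [← hlast]
  convert! this using 3
  simp [add_comm]

/-- An extremal family has two members meeting in a single point. -/
lemma exists_inter_eq_singleton (hk : 0 < k) (hkn : 2 * k < n) (hα : Fintype.card α = n)
    (hcard : ∀ s ∈ F, s.card = k) (hint : ∀ s ∈ F, ∀ t ∈ F, (s ∩ t).Nonempty)
    (hF : F.card = (n - 1).choose (k - 1)) : ∃ A ∈ F, ∃ B ∈ F, ∃ x, A ∩ B = {x} := by
  obtain ⟨σ⟩ : Nonempty (ZMod n ≃ α) := Fintype.card_eq.1 (by rw [ZMod.card, hα])
  have hS := card_starts hk hkn.le hα hcard hint hF σ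
  obtain ⟨a, ha, ha'⟩ : ∃ a ∈ starts k F σ, a - 1 ∉ starts k F σ := by
    by_contra! h
    obtain ⟨a, ha⟩ := card_pos.1 (by omega : 0 < (starts k F σ).card)
    have hall (j : ℕ) : a - (j : ZMod n) ∈ starts k F σ := by
      induction j with
      | zero => simpa
      | succ j ih => simpa [sub_sub] using h _ ih
    have huniv : starts k F σ = univ := by
      ext i
      simpa using hall (a - i).val
    rw [huniv, card_univ, ZMod.card] at hS
    omega
  have hb := (noDisjointArcs_starts hint σ).add_mem hkn hS ha ha' (show k - 1 < k by omega)
  refine ⟨_, mem_starts.1 ha, _, mem_starts.1 hb, σ (a + ((k - 1 : ℕ) : ZMod n)), ?_⟩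
  rw [← map_inter, arc_inter_arc hk hkn.le, map_singleton]
  rfl

/-- An extremal family contains all `k`-sets through some point. -/
lemma exists_forall_mem (hk : 0 < k) (hkn : 2 * k < n) (hα : Fintype.card α = n)
    (hcard : ∀ s ∈ F, s.card = k) (hint : ∀ s ∈ F, ∀ t ∈ F, (s ∩ t).Nonempty)
    (hF : F.card = (n - 1).choose (k - 1)) : ∃ x, ∀ S : Finset α, S.card = k → x ∈ S → S ∈ F := by
  obtain ⟨A, hA, B, hB, x, hAB⟩ := exists_inter_eq_singleton hk hkn hα hcard hint hF
  have hxAB : x ∈ A ∩ B := by simp [hAB]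
  have hxA := (mem_inter.1 hxAB).1
  have exists_notMem (C : Finset α) (hC : C.card = k) : ∃ z, z ∉ A ∧ z ∉ C := by
    obtain ⟨z, -, hz⟩ := exists_mem_notMem_of_card_lt_card (s := A ∪ C) (t := univ) (by
      have := card_union_le A C
      rw [card_univ, hα]
      have := hcard A hA
      omega)
    exact ⟨z, by simpa using hz⟩
  refine ⟨x, fun S hS hxS => ?_⟩
  obtain ⟨z, hzA, hzB⟩ := exists_notMem B (hcard B hB)
  obtain ⟨y, hyA, hyS⟩ := exists_notMem S hS
  obtain ⟨Q, hQ, hQcard⟩ := exists_subset_card_eq (s := univ \ insert z (insert y A)) (n := k - 1)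
    (by
      have h1 := card_insert_le z (insert y A)
      have h2 := card_insert_le y A
      have h3 := hcard A hA
      rw [card_univ_sdiff, hα]
      omega)
  have hQmem (w : α) (hw : w ∈ Q) : w ≠ z ∧ w ≠ y ∧ w ∉ A := by simpa using hQ hw
  have hxQ : x ∉ Q := fun h => (hQmem x h).2.2 hxA
  have hB' : insert x Q ∈ F := by
    refine mem_of_inter_eq_singleton hkn hα hcard hint hF hA hB hAB hzA hzB ?_
      (mem_insert_self x Q) ?_
    · rw [card_insert_of_notMem hxQ]
      omega
    · grind
  refine mem_of_inter_eq_singleton hkn hα hcard hint hF hA hB' ?_ hyA ?_ hS hxS hyS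
  · ext w
    grind
  · grind

end Families

lemma card_filter_card_eq_mem {α : Type*} [Fintype α] [DecidableEq α] {k : ℕ} (hk : 0 < k)
    (x : α) :
    #{s : Finset α | s.card = k ∧ x ∈ s} = (Fintype.card α - 1).choose (k - 1) := by
  have := card_filter_powersetCard_subset {x} (univ : Finset α) k (subset_univ _) (by simpa)
  rw [card_singleton, card_univ] at this
  rw [← this]
  congr 1
  ext s
  simp

end ErdosKoRado

open ErdosKoRado in
/-- Erdős–Ko–Rado theorem: if `n ≥ 2k`, an intersecting family of `k`-subsets of an
`n`-set has size at most `C(n-1, k-1)`; moreover if `n > 2k`, equality holds iff the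
family consists of all `k`-subsets containing some fixed element. -/
theorem stmt_0 (n k : ℕ) (hk : 0 < k) (hn : 0 < n) (h : 2 * k ≤ n)
    (F : Finset (Finset (Fin n)))
    (hcard : ∀ s ∈ F, s.card = k)
    (hint : ∀ s ∈ F, ∀ t ∈ F, (s ∩ t).Nonempty) :
    F.card ≤ (n - 1).choose (k - 1) ∧
      (2 * k < n →
        (F.card = (n - 1).choose (k - 1) ↔
          ∃ x : Fin n,
            F = Finset.univ.filter (fun s : Finset (Fin n) => s.card = k ∧ x ∈ s))) := by
  have : NeZero n := ⟨hn.ne'⟩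
  refine ⟨erdos_ko_rado (fun s hs t ht hst => ?_) (fun s hs => hcard s hs) (by omega),
    fun hkn => ⟨fun hF => ?_, ?_⟩⟩
  · exact (hint s hs t ht).ne_empty (disjoint_iff_inter_eq_empty.1 hst)
  · obtain ⟨x, hx⟩ := exists_forall_mem hk hkn (Fintype.card_fin n) hcard hint hF
    refine ⟨x, (eq_of_subset_of_card_le (fun s hs => ?_) ?_).symm⟩
    · obtain ⟨-, hsk, hxs⟩ := mem_filter.1 hs
      exact hx s hsk hxs
    · rw [card_filter_card_eq_mem hk, Fintype.card_fin, hF]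
  · rintro ⟨x, rfl⟩
    rw [card_filter_card_eq_mem hk, Fintype.card_fin]
end

section
/- Let k and m be positive integers with m ≥ k + 1. If A is an intersecting collection of k-multisets with elements from {1,…,m}, then |A| ≤ C(m+k−2, k−1). -/
open Finset in
/-- There are at most `C(k-1, k-|S|)` multisets of size `k` with support `S`. -/
theorem Sym.card_filter_toFinset_eq_le {α : Type*} [Fintype α] [DecidableEq α] {k : ℕ} (hk : 0 < k)
    (S : Finset α) :
    #{s : Sym α k | (s : Multiset α).toFinset = S} ≤ (k - 1).choose (k - #S) := by
  rcases lt_or_ge k (#S) with hlt | hle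
  · rw [filter_eq_empty_iff.2, card_empty]
    · exact Nat.zero_le _
    · rintro s - rfl
      exact absurd (Multiset.toFinset_card_le (s : Multiset α)) (by simpa using hlt)
  have hcard : #(univ : Finset (Sym S (k - #S))) = (k - 1).choose (k - #S) := by
    rw [card_univ, Sym.card_sym_eq_choose, Fintype.card_coe]
    congr 1
    omega
  rw [← hcard]
  let f : Sym S (k - #S) → Sym α k := fun t =>
    ⟨(t : Multiset S).map Subtype.val + S.val, by simp [hle]⟩
  refine card_le_card_of_surjOn f fun s hs => ?_
  obtain rfl : (s : Multiset α).toFinset = S := by simpa using hs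
  have hsub : (s : Multiset α).toFinset.val ≤ (s : Multiset α) := by
    simpa using Multiset.dedup_le (s : Multiset α)
  have hmem : ∀ x ∈ (s : Multiset α) - (s : Multiset α).toFinset.val,
      x ∈ (s : Multiset α).toFinset := fun x hx =>
    Multiset.mem_toFinset.2 (Multiset.mem_of_le (Multiset.sub_le_self _ _) hx)
  refine ⟨⟨((s : Multiset α) - (s : Multiset α).toFinset.val).pmap Subtype.mk hmem, ?_⟩,
    Finset.mem_coe.2 (mem_univ _), Sym.ext ?_⟩
  · rw [Multiset.card_pmap, Multiset.card_sub hsub, Sym.card_coe, Finset.card_val]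
  · change Multiset.map Subtype.val (Multiset.pmap Subtype.mk _ hmem) + _ = _
    rw [Multiset.map_pmap, Multiset.pmap_eq_map, Multiset.map_id', tsub_add_cancel_of_le hsub]

open Finset in
/-- The `k`-multisets on `α` embed into the `k`-subsets of `α ⊕ Fin (k - 1)` in such a way that the
part of the image in `α` is the support of the multiset. -/
theorem Sym.exists_injective_toLeft_eq_toFinset {α : Type*} [Fintype α] [DecidableEq α] {k : ℕ}
    (hk : 0 < k) :
    ∃ g : Sym α k → Finset (α ⊕ Fin (k - 1)), Function.Injective g ∧
      ∀ s, (g s).toLeft = (s : Multiset α).toFinset ∧ #(g s) = k := by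
  have key (S : Finset α) : ∃ f : Sym α k → Finset (Fin (k - 1)),
      (({s : Sym α k | (s : Multiset α).toFinset = S} : Finset (Sym α k)) : Set (Sym α k)) ⊆
        f ⁻¹' (powersetCard (k - #S) univ : Finset (Finset (Fin (k - 1)))) ∧
      Set.InjOn f ({s : Sym α k | (s : Multiset α).toFinset = S} : Finset (Sym α k)) := by
    apply Set.Finite.exists_injOn_of_encard_le (finite_toSet _)
    simpa [Set.encard_coe_eq_coe_finsetCard, -coe_filter] using
      Sym.card_filter_toFinset_eq_le hk S
  choose f hmaps hinj using key
  refine ⟨fun s => (s : Multiset α).toFinset.disjSum (f (s : Multiset α).toFinset s), ?_, ?_⟩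
  · intro s t hst
    obtain ⟨hS, hf⟩ := disjSum_inj.1 hst
    rw [← hS] at hf
    exact hinj _ (by simp) (by simp [hS]) hf
  · intro s
    have hs : f (s : Multiset α).toFinset s ∈ powersetCard (k - #(s : Multiset α).toFinset) univ :=
      Finset.mem_coe.1 (Set.mem_preimage.1 (@hmaps (s : Multiset α).toFinset s (by simp)))
    have hle : #(s : Multiset α).toFinset ≤ k := by
      simpa using Multiset.toFinset_card_le (s : Multiset α)
    refine ⟨toLeft_disjSum, ?_⟩
    rw [card_disjSum, (mem_powersetCard.1 hs).2]
    omega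

/-- If `m ≥ k + 1`, an intersecting collection of `k`-multisets from `{1,…,m}`
has size at most `C(m+k-2, k-1)`. -/
theorem stmt_1 (k m : ℕ) (hk : 0 < k) (hm : 0 < m) (h : k + 1 ≤ m)
    (A : Finset (Sym (Fin m) k))
    (hint : ∀ s ∈ A, ∀ t ∈ A, ∃ x : Fin m, x ∈ s ∧ x ∈ t) :
    A.card ≤ (m + k - 2).choose (k - 1) := by
  obtain ⟨g, hg, hgs⟩ := Sym.exists_injective_toLeft_eq_toFinset (α := Fin m) hk
  let G : Sym (Fin m) k ↪ Finset (Fin (m + (k - 1))) :=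
    ⟨fun s => (g s).map finSumFinEquiv.toEmbedding, (Finset.map_injective _).comp hg⟩
  have hmem {s : Sym (Fin m) k} {x : Fin m} (hx : x ∈ s) : finSumFinEquiv (Sum.inl x) ∈ G s := by
    refine Finset.mem_map_of_mem _ (Finset.mem_toLeft.1 ?_)
    simpa [(hgs s).1] using hx
  have hEKR := Finset.erdos_ko_rado (𝒜 := A.map G) (r := k) ?_ ?_ (by omega)
  · rwa [Finset.card_map, show m + (k - 1) - 1 = m + k - 2 by omega] at hEKR
  · intro B hB C hC hBC
    obtain ⟨s, hs, rfl⟩ := Finset.mem_map.1 hB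
    obtain ⟨t, ht, rfl⟩ := Finset.mem_map.1 hC
    obtain ⟨x, hxs, hxt⟩ := hint s hs t ht
    exact Finset.disjoint_left.1 hBC (hmem hxs) (hmem hxt)
  · intro B hB
    obtain ⟨s, -, rfl⟩ := Finset.mem_map.1 hB
    exact (Finset.card_map _).trans (hgs s).2
end

section
/- Let k and m be positive integers with m > k + 1. If A is an intersecting collection of k-multisets with elements from {1,…,m}, then |A| = C(m+k−2, k−1) holds if and only if there exists a fixed element x ∈ {1,…,m} such that A is exactly the collection of all k-multisets on {1,…,m} that contain x. -/
open Finset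

/-- The cyclic interval of length `k` starting at `i` in `Fin n`. -/
def cyclicArc (n k i : ℕ) : Finset (Fin n) :=
  {p | (i ≤ (p : ℕ) ∧ (p : ℕ) < i + k) ∨ (p : ℕ) + n < i + k}

lemma mem_cyclicArc {n k i : ℕ} {p : Fin n} :
    p ∈ cyclicArc n k i ↔ (i ≤ (p : ℕ) ∧ (p : ℕ) < i + k) ∨ (p : ℕ) + n < i + k := by
  simp [cyclicArc]

lemma card_cyclicArc {n k i : ℕ} (hi : i < n) (hk : k ≤ n) : #(cyclicArc n k i) = k := by
  conv_rhs => rw [← card_range k]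
  refine card_nbij' (fun p => if i ≤ (p : ℕ) then (p : ℕ) - i else (p : ℕ) + n - i)
    (fun j => if h : i + j < n then ⟨i + j, h⟩ else ⟨(i + j - n) % n, Nat.mod_lt _ (by omega)⟩)
    ?_ ?_ ?_ ?_
  · intro p hp
    simp only [mem_coe, mem_cyclicArc, mem_range] at hp ⊢
    have := p.2
    split_ifs <;> omega
  · intro j hj
    simp only [mem_coe, mem_cyclicArc, mem_range] at hj ⊢
    split_ifs with h
    · simp only; omega
    · simp only; rw [Nat.mod_eq_of_lt (by omega)]; omega
  · intro p hp
    simp only [mem_coe, mem_cyclicArc] at hp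
    have := p.2
    ext
    by_cases h : i ≤ (p : ℕ)
    · simp only [h, if_true]
      rw [dif_pos (by omega)]
      simp only; omega
    · simp only [h, if_false]
      rw [dif_neg (by omega)]
      simp only; rw [Nat.mod_eq_of_lt (by omega)]; omega
  · intro j hj
    simp only [mem_coe, mem_range] at hj
    by_cases h : i + j < n
    · simp [h]
    · simp only [h, dite_false]
      rw [Nat.mod_eq_of_lt (by omega), if_neg (by omega)]
      omega

lemma disjoint_cyclicArc {n k i j : ℕ} (hj : j < n) (hij : i + k ≤ j)
    (hji : j + k ≤ i + n) :
    Disjoint (cyclicArc n k i) (cyclicArc n k j) := by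
  rw [disjoint_left]
  intro p hp hq
  rw [mem_cyclicArc] at hp hq
  have := p.2
  omega

/-- The fold identifying the residues `t` and `t + (n - k)` for `t < k`. -/
lemma injOn_fold_of_cyclic_close {n k a : ℕ} (hn : 2 * k ≤ n) {S : Finset ℕ}
    (haS : a ∈ S) (ha : ∀ i ∈ S, a ≤ i)
    (hS : ∀ i ∈ S, ∀ j ∈ S, i + k ≤ j → i + n < j + k) :
    Set.InjOn (fun s => if s - a < k then s - a else s - a - (n - k)) (S : Set ℕ) := by
  intro s hs t ht hst
  have h1 := ha s hs
  have h2 := ha t ht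
  have h3 := hS s hs t ht
  have h4 := hS t ht s hs
  have h5 := hS a haS s hs
  have h6 := hS a haS t ht
  simp only at hst
  split_ifs at hst <;> omega

lemma mapsTo_fold_of_cyclic_close {n k a : ℕ} (hk : 0 < k) {S : Finset ℕ} (haS : a ∈ S)
    (hSn : ∀ i ∈ S, i < n)
    (hS : ∀ i ∈ S, ∀ j ∈ S, i + k ≤ j → i + n < j + k) :
    Set.MapsTo (fun s => if s - a < k then s - a else s - a - (n - k)) (S : Set ℕ)
      (range k : Set ℕ) := by
  intro s hs
  have h1 := hSn s hs
  have h2 := hS a haS s hs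
  simp only [coe_range, Set.mem_Iio]
  split_ifs <;> omega

/-- At most `k` starting points of pairwise intersecting arcs. -/
lemma card_le_of_cyclic_close {n k : ℕ} (hk : 0 < k) (hn : 2 * k ≤ n) {S : Finset ℕ}
    (hSn : ∀ i ∈ S, i < n)
    (hS : ∀ i ∈ S, ∀ j ∈ S, i + k ≤ j → i + n < j + k) : #S ≤ k := by
  rcases S.eq_empty_or_nonempty with rfl | hne
  · simp
  · rw [← card_range k]
    exact card_le_card_of_injOn _ (mapsTo_fold_of_cyclic_close hk (S.min'_mem hne) hSn hS)
      (injOn_fold_of_cyclic_close hn (S.min'_mem hne) (fun i hi => S.min'_le i hi) hS)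

/-- If `k` pairwise intersecting arcs include the one starting at `0` but not the one starting
at `1`, they are exactly the arcs covering the point `0`. -/
lemma mem_of_cyclic_close_of_card_eq {n k : ℕ} (hk : 0 < k) (hn : 2 * k < n) {S : Finset ℕ}
    (hSn : ∀ i ∈ S, i < n)
    (hS : ∀ i ∈ S, ∀ j ∈ S, i + k ≤ j → i + n < j + k) (hcard : #S = k)
    (h0 : 0 ∈ S) (h1 : 1 ∉ S) {i : ℕ} (hi : 0 < i) (hik : i < k) : i + (n - k) ∈ S := by
  have hsurj := surjOn_of_injOn_of_card_le _ (mapsTo_fold_of_cyclic_close hk h0 hSn hS)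
    (injOn_fold_of_cyclic_close hn.le h0 (fun i _ => Nat.zero_le i) hS) (by simp [hcard])
  have hor : ∀ j < k, j ∈ S ∨ j + (n - k) ∈ S := by
    intro j hj
    obtain ⟨s, hs, hsj⟩ := hsurj (show j ∈ (range k : Set ℕ) by simpa using hj)
    have h2 := hS 0 h0 s hs
    simp only [Nat.sub_zero] at hsj
    split_ifs at hsj with h
    · left; rwa [← hsj]
    · right
      rwa [show j + (n - k) = s by omega]
  have hnot : ∀ j, 0 < j → j < k → j ∉ S := by
    intro j hj
    induction j, hj using Nat.le_induction with
    | base => exact fun _ => h1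
    | succ j hj ih =>
      intro hjk hmem
      have h3 := (hor j (by omega)).resolve_left (ih (by omega))
      have h4 := hS _ hmem _ h3
      omega
  exact (hor i hik).resolve_left (hnot i hi hik)

/-- Every `ℕ`-valued weight admits an enumeration of `V` by nondecreasing weight. -/
lemma exists_enum_monotone {V : Type*} [Fintype V] (w : V → ℕ) :
    ∃ σ : Fin (Fintype.card V) ≃ V, ∀ (p : Fin (Fintype.card V)) a, (p : ℕ) < #{v | w v ≤ a} ↔ w (σ p) ≤ a := by
  let e : Fin (Fintype.card V) ≃ V := (Fintype.equivFin V).symm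
  let σ := (Tuple.sort (w ∘ e)).trans e
  have hmono : Monotone (w ∘ σ) := Tuple.monotone_sort (w ∘ e)
  refine ⟨σ, fun p a => ?_⟩
  have hcard : #{i | (w ∘ σ) i ≤ a} = #{v | w v ≤ a} := card_equiv σ (by simp)
  rw [← hcard]
  exact Tuple.lt_card_le_iff_apply_le_of_monotone hmono

variable {V : Type*} [DecidableEq V]

lemma exists_perm_map_eq [Fintype V] {G H : Finset V} (h : #G = #H) :
    ∃ τ : Equiv.Perm V, G.map τ.toEmbedding = H := by
  let e : {x // x ∈ G} ≃ {x // x ∈ H} := Finset.equivOfCardEq h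
  refine ⟨e.extendSubtype, eq_of_subset_of_card_le ?_ (by simp [h])⟩
  intro y hy
  obtain ⟨x, hx, rfl⟩ := mem_map.1 hy
  exact e.extendSubtype_mem x hx

lemma card_equiv_map_eq [Fintype V] {n : ℕ} (I : Finset (Fin n)) {G H : Finset V} (h : #G = #H) :
    #{σ : Fin n ≃ V | I.map σ.toEmbedding = G} = #{σ : Fin n ≃ V | I.map σ.toEmbedding = H} := by
  obtain ⟨τ, rfl⟩ := exists_perm_map_eq h
  refine card_equiv ((Equiv.refl _).equivCongr τ) fun σ => ?_
  simp only [mem_filter_univ]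
  rw [show (Equiv.equivCongr (Equiv.refl (Fin n)) τ σ).toEmbedding
    = σ.toEmbedding.trans τ.toEmbedding from rfl, ← map_map, map_inj]

/-- The proportion of enumerations mapping a fixed `k`-set into `F` is the density of `F`. -/
lemma card_equiv_map_mem_mul_choose [Fintype V] {k : ℕ} {F : Finset (Finset V)} (hF : ∀ G ∈ F, #G = k)
    {I : Finset (Fin (Fintype.card V))} (hI : #I = k) :
    #{σ : Fin (Fintype.card V) ≃ V | I.map σ.toEmbedding ∈ F} * (Fintype.card V).choose k
      = #F * (Fintype.card V).factorial := by
  let e : Fin (Fintype.card V) ≃ V := (Fintype.equivFin V).symm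
  let c := #{σ : Fin (Fintype.card V) ≃ V | I.map σ.toEmbedding = I.map e.toEmbedding}
  have key : ∀ F : Finset (Finset V), (∀ G ∈ F, #G = k) →
      #{σ : Fin (Fintype.card V) ≃ V | I.map σ.toEmbedding ∈ F} = #F * c := by
    intro F hF
    rw [card_eq_sum_card_fiberwise (f := fun σ => I.map σ.toEmbedding) (t := F)
      (fun σ hσ => by simpa using hσ), ← smul_eq_mul, ← sum_const]
    refine sum_congr rfl fun G hG => ?_
    rw [filter_filter, show c = _ from card_equiv_map_eq (H := G) I (by simp [hI, hF G hG])]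
    congr 1
    ext σ
    simp only [mem_filter_univ, and_iff_right_iff_imp]
    rintro rfl
    exact hG
  have h1 := key (powersetCard k univ) (fun G hG => (mem_powersetCard.1 hG).2)
  have h2 : #{σ : Fin (Fintype.card V) ≃ V | I.map σ.toEmbedding ∈ powersetCard k univ}
      = (Fintype.card V).factorial := by
    rw [filter_true_of_mem (fun σ _ => by simp [mem_powersetCard, hI]), card_univ,
      Fintype.card_equiv e, Fintype.card_fin]
  rw [card_powersetCard, card_univ, h2] at h1
  rw [key F hF, h1]
  ring

/-- The starting points of the arcs which `σ` maps into `F`. -/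
def arcStarts {n : ℕ} (k : ℕ) (F : Finset (Finset V)) (σ : Fin n ≃ V) : Finset ℕ :=
  {i ∈ range n | (cyclicArc n k i).map σ.toEmbedding ∈ F}

lemma mem_arcStarts {n k : ℕ} {F : Finset (Finset V)} {σ : Fin n ≃ V} {i : ℕ} :
    i ∈ arcStarts k F σ ↔ i < n ∧ (cyclicArc n k i).map σ.toEmbedding ∈ F := by
  simp [arcStarts]

lemma arcStarts_cyclic_close {n k : ℕ} {F : Finset (Finset V)}
    (hF : (F : Set (Finset V)).Intersecting) (σ : Fin n ≃ V) :
    ∀ i ∈ arcStarts k F σ, ∀ j ∈ arcStarts k F σ, i + k ≤ j → i + n < j + k := by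
  intro i hi j hj hij
  by_contra hcon
  exact hF (mem_arcStarts.1 hi).2 (mem_arcStarts.1 hj).2
    ((disjoint_map _).2 (disjoint_cyclicArc (mem_arcStarts.1 hj).1 hij (by omega)))

lemma card_arcStarts_le {n k : ℕ} (hk : 0 < k) (hn : 2 * k ≤ n) {F : Finset (Finset V)}
    (hF : (F : Set (Finset V)).Intersecting) (σ : Fin n ≃ V) : #(arcStarts k F σ) ≤ k :=
  card_le_of_cyclic_close hk hn (fun _ hi => (mem_arcStarts.1 hi).1) (arcStarts_cyclic_close hF σ)

lemma card_arcStarts_eq [Fintype V] {k : ℕ} (hk : 0 < k) (hn : 2 * k ≤ Fintype.card V)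
    {F : Finset (Finset V)} (hF : (F : Set (Finset V)).Intersecting) (hFk : ∀ G ∈ F, #G = k)
    (hcard : #F = (Fintype.card V - 1).choose (k - 1)) :
    ∀ σ : Fin (Fintype.card V) ≃ V, #(arcStarts k F σ) = k := by
  set n := Fintype.card V with hnV
  have hsum : ∑ σ : Fin n ≃ V, #(arcStarts k F σ) = ∑ σ : Fin n ≃ V, k := by
    have hpos : 0 < n.choose k := Nat.choose_pos (by omega)
    have hswap : ∑ σ : Fin n ≃ V, #(arcStarts k F σ)
        = ∑ i ∈ range n, #{σ : Fin n ≃ V | (cyclicArc n k i).map σ.toEmbedding ∈ F} := by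
      simp only [arcStarts, card_filter]
      exact sum_comm
    apply Nat.eq_of_mul_eq_mul_right hpos
    rw [hswap, sum_mul, sum_congr rfl fun i hi =>
      card_equiv_map_mem_mul_choose hFk (card_cyclicArc (mem_range.1 hi) (by omega)),
      sum_const, sum_const, card_range, card_univ, Fintype.card_equiv (Fintype.equivFin V).symm,
      Fintype.card_fin, hcard, ← hnV]
    obtain ⟨l, rfl⟩ : ∃ l, k = l + 1 := ⟨k - 1, by omega⟩
    obtain ⟨N, hN⟩ : ∃ N, n = N + 1 := ⟨n - 1, by omega⟩
    rw [hN]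
    have := Nat.add_one_mul_choose_eq N l
    simp only [smul_eq_mul, Nat.add_sub_cancel]
    rw [← mul_assoc, this]
    ring
  exact fun σ => (sum_eq_sum_iff_of_le fun σ _ => card_arcStarts_le hk hn hF σ).1 hsum σ (mem_univ σ)

/-- If exchanging `x ∈ A` for `y ∉ A` leaves an extremal intersecting family `F`, then `F`
contains every `k`-set containing `x` and not `y`. -/
lemma mem_of_exchange_notMem [Fintype V] {k : ℕ} (hn : 2 * k < Fintype.card V)
    {F : Finset (Finset V)} (hF : (F : Set (Finset V)).Intersecting) (hFk : ∀ G ∈ F, #G = k)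
    (hcard : #F = (Fintype.card V - 1).choose (k - 1)) {A : Finset V} (hA : A ∈ F) {x y : V}
    (hx : x ∈ A) (hy : y ∉ A) (hxy : insert y (A.erase x) ∉ F) {G : Finset V} (hG : #G = k)
    (hxG : x ∈ G) (hyG : y ∉ G) : G ∈ F := by
  have hAk := hFk A hA
  have hk : 0 < k := hAk ▸ card_pos.2 ⟨x, hx⟩
  let w : V → ℕ := fun v => if v = x then 0 else if v ∈ A then (if v ∈ G then 1 else 2)
    else if v = y then 3 else if v ∈ G then 5 else 4
  obtain ⟨σ, hσ⟩ := exists_enum_monotone w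
  have level : ∀ (a : ℕ) (B : Finset V), (∀ v, w v ≤ a ↔ v ∈ B) →
      ∀ p, σ p ∈ B ↔ (p : ℕ) < #B := by
    intro a B hB p
    rw [← hB, ← hσ]
    congr! 2
    ext v
    simp [hB]
  have hx' := level 0 {x} (by intro v; simp only [w]; grind)
  have hAG' := level 1 (A ∩ G) (by intro v; simp only [w]; grind)
  have hA' := level 2 A (by intro v; simp only [w]; grind)
  have hy' := level 3 (insert y A) (by intro v; simp only [w]; grind)
  have hGA' := level 4 (G \ A)ᶜ (by intro v; simp only [w, mem_compl]; grind)
  rw [card_singleton] at hx'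
  rw [card_insert_of_notMem hy, hAk] at hy'
  rw [hAk] at hA'
  rw [card_compl] at hGA'
  have hcardG : #(A ∩ G) + #(G \ A) = k := by
    rw [inter_comm, card_inter_add_card_sdiff, hG]
  have hAGpos : 0 < #(A ∩ G) := card_pos.2 ⟨x, by simp [hx, hxG]⟩
  have map_eq : ∀ (I : Finset (Fin (Fintype.card V))) (B : Finset V),
      (∀ p, p ∈ I ↔ σ p ∈ B) → I.map σ.toEmbedding = B := by
    intro I B hIB
    ext v
    obtain ⟨p, rfl⟩ := σ.surjective v
    rw [← hIB, mem_map_equiv, Equiv.symm_apply_apply]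
  have harc0 : (cyclicArc (Fintype.card V) k 0).map σ.toEmbedding = A :=
    map_eq _ _ fun p => by rw [mem_cyclicArc, hA']; omega
  have harc1 : (cyclicArc (Fintype.card V) k 1).map σ.toEmbedding = insert y (A.erase x) :=
    map_eq _ _ fun p => by
      have h1 := hx' p
      have h2 := hy' p
      have h3 : σ p ∈ insert y (A.erase x) ↔ σ p ∈ insert y A ∧ σ p ∉ ({x} : Finset V) := by grind
      rw [mem_cyclicArc, h3, h1, h2]
      omega
  rcases Nat.eq_zero_or_pos #(G \ A) with hu | hu
  · have hsub : G ⊆ A := by simpa [sdiff_eq_empty_iff_subset] using hu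
    rwa [eq_of_subset_of_card_le hsub (by omega)]
  · have hmem := mem_of_cyclic_close_of_card_eq hk hn (fun _ hi => (mem_arcStarts.1 hi).1)
      (arcStarts_cyclic_close hF σ) (card_arcStarts_eq hk hn.le hF hFk hcard σ)
      (mem_arcStarts.2 ⟨by omega, harc0.symm ▸ hA⟩)
      (fun h => hxy (harc1 ▸ (mem_arcStarts.1 h).2)) hAGpos (by omega)
    have harc : (cyclicArc (Fintype.card V) k (#(A ∩ G) + (Fintype.card V - k))).map
        σ.toEmbedding = G :=
      map_eq _ _ fun p => by
        have h1 := hAG' p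
        have h2 := hGA' p
        have h3 : σ p ∈ G ↔ σ p ∈ A ∩ G ∨ ¬ σ p ∈ (G \ A)ᶜ := by rw [mem_compl]; grind
        have := p.2
        rw [mem_cyclicArc, h3, h1, h2]
        omega
    exact harc ▸ (mem_arcStarts.1 hmem).2

/-- A family of `k`-sets having a member and a nonmember has an exchange leaving the family. -/
lemma exists_exchange_notMem {k : ℕ} {F : Finset (Finset V)} {A B : Finset V} (hA : A ∈ F)
    (hB : B ∉ F) (hAk : #A = k) (hBk : #B = k) :
    ∃ A ∈ F, ∃ x ∈ A, ∃ y ∉ A, insert y (A.erase x) ∉ F := by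
  induction hd : #(B \ A) using Nat.strong_induction_on generalizing A with
  | _ d ih =>
    have hne : A ≠ B := fun h => hB (h ▸ hA)
    obtain ⟨x, hxA, hxB⟩ : ∃ x ∈ A, x ∉ B := by
      by_contra! hcon
      exact hne (eq_of_subset_of_card_le hcon (by omega))
    obtain ⟨y, hyB, hyA⟩ : ∃ y ∈ B, y ∉ A := by
      by_contra! hcon
      exact hne (eq_of_subset_of_card_le hcon (by omega)).symm
    by_cases hmem : insert y (A.erase x) ∈ F
    · refine ih _ ?_ hmem ?_ rfl
      · rw [← hd]
        refine card_lt_card ((ssubset_iff_of_subset ?_).2 ⟨y, by grind, by grind⟩)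
        intro v hv
        grind
      · rw [card_insert_of_notMem (by grind), card_erase_add_one hxA, hAk]
    · exact ⟨A, hA, x, hxA, y, hyA, hmem⟩

/-- The number of `k`-subsets containing a fixed element. -/
lemma card_powersetCard_filter_mem [Fintype V] {k : ℕ} (hk : 0 < k) (x : V) :
    #{G ∈ powersetCard k (univ : Finset V) | x ∈ G} = (Fintype.card V - 1).choose (k - 1) := by
  rw [← card_univ, ← card_erase_of_mem (mem_univ x), ← card_powersetCard]
  refine card_nbij' (fun G => G.erase x) (fun G => insert x G) ?_ ?_ ?_ ?_
  · intro G hG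
    simp only [coe_filter, mem_powersetCard, Set.mem_ofPred_eq, mem_coe] at hG ⊢
    exact ⟨erase_subset_erase x hG.1.1, by rw [card_erase_of_mem hG.2, hG.1.2]⟩
  · intro G hG
    simp only [coe_filter, mem_powersetCard, Set.mem_ofPred_eq, mem_coe] at hG ⊢
    refine ⟨⟨subset_univ _, ?_⟩, mem_insert_self _ _⟩
    rw [card_insert_of_notMem fun h => by simpa using hG.1 h]
    omega
  · intro G hG
    simp only [coe_filter, Set.mem_ofPred_eq] at hG
    exact insert_erase hG.2
  · intro G hG
    simp only [mem_coe, mem_powersetCard] at hG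
    exact erase_insert fun h => by simpa using hG.1 h

/-- The uniqueness part of the Erdős–Ko–Rado theorem: for `n > 2k`, an intersecting family of
`k`-subsets of an `n`-set attaining the maximum size consists of all `k`-sets through a point. -/
theorem exists_forall_mem_iff_of_intersecting_of_card_eq [Fintype V] {k : ℕ} (hk : 0 < k)
    (hn : 2 * k < Fintype.card V) {F : Finset (Finset V)}
    (hF : (F : Set (Finset V)).Intersecting) (hFk : ∀ G ∈ F, #G = k)
    (hcard : #F = (Fintype.card V - 1).choose (k - 1)) :
    ∃ x, ∀ G, G ∈ F ↔ #G = k ∧ x ∈ G := by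
  obtain ⟨A, hA⟩ : F.Nonempty := card_pos.1 (hcard ▸ Nat.choose_pos (by omega))
  obtain ⟨B, hBA, hBk⟩ : ∃ B ⊆ Aᶜ, #B = k :=
    exists_subset_card_eq (by rw [card_compl, hFk A hA]; omega)
  have hB : B ∉ F := fun h => hF hA h (disjoint_left.2 fun v hvA hvB => by
    simpa [hvA] using hBA hvB)
  obtain ⟨A, hA, x, hx, y, hy, hxy⟩ := exists_exchange_notMem hA hB (hFk A hA) hBk
  have hmem : ∀ G ∈ F, x ∈ G := by
    intro G hG
    by_contra hxG
    obtain ⟨H, hxH, hHG, hHk⟩ : ∃ H, {x} ⊆ H ∧ H ⊆ (insert y G)ᶜ ∧ #H = k := by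
      refine exists_subsuperset_card_eq ?_ (by simpa) ?_
      · rw [singleton_subset_iff, mem_compl]
        grind
      · have := card_insert_le y G
        rw [card_compl]
        have := hFk G hG
        omega
    refine hF hG (mem_of_exchange_notMem hn hF hFk hcard hA hx hy hxy hHk
      (by simpa using hxH) fun h => ?_) (disjoint_left.2 fun v hvG hvH => ?_)
    · simpa using hHG h
    · simpa [hvG] using hHG hvH
  have hsub : F ⊆ {G ∈ powersetCard k (univ : Finset V) | x ∈ G} := fun G hG => by
    simp [mem_powersetCard, hFk G hG, hmem G hG]
  have heq := eq_of_subset_of_card_le hsub (by rw [card_powersetCard_filter_mem hk, hcard])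
  refine ⟨x, fun G => ?_⟩
  rw [heq]
  simp [mem_powersetCard]

/-- The number of `k`-multisets with support `S`. -/
lemma card_sym_filter_toFinset_eq [Fintype V] {k : ℕ} (S : Finset V)
    (hS : #S ≤ k) :
    #{s : Sym V k | (s : Multiset V).toFinset = S} = (k - 1).choose (k - #S) := by
  have hmc : (k - 1).choose (k - #S) = Fintype.card (Sym S (k - #S)) := by
    rw [Sym.card_sym_eq_choose, Fintype.card_coe]
    congr 2
    omega
  rw [hmc, ← card_univ]
  symm
  refine card_nbij
    (fun t => ⟨S.val + (t : Multiset S).map Subtype.val, by simp; omega⟩) ?_ ?_ ?_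
  · intro t _
    simp only [coe_filter, mem_univ, true_and]
    ext v
    rw [Multiset.mem_toFinset, Sym.coe_mk, Multiset.mem_add, Multiset.mem_map, mem_val]
    exact ⟨fun h => h.elim id fun ⟨a, _, ha⟩ => ha ▸ a.2, Or.inl⟩
  · intro t _ t' _ h
    have h2 := congrArg Subtype.val h
    simp only [add_right_inj] at h2
    exact Sym.coe_injective (Multiset.map_injective Subtype.val_injective h2)
  · intro s hs
    simp only [coe_filter, mem_univ, true_and, Set.mem_ofPred_eq] at hs
    have hle : S.val ≤ (s : Multiset V) := by
      rw [← hs]; exact Multiset.dedup_le _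
    have hmem : ∀ v ∈ (s : Multiset V) - S.val, v ∈ S := by
      intro v hv
      rw [← hs, Multiset.mem_toFinset]
      exact Multiset.mem_of_le (Multiset.sub_le_self _ _) hv
    refine ⟨⟨((s : Multiset V) - S.val).pmap Subtype.mk hmem, ?_⟩, mem_coe.2 (mem_univ _), ?_⟩
    · rw [Multiset.card_pmap, Multiset.card_sub hle, Sym.card_coe]; rfl
    · apply Sym.coe_injective
      simp only [Sym.coe_mk, Multiset.map_pmap]
      rw [Multiset.pmap_eq_map, Multiset.map_id', add_tsub_cancel_of_le hle]

/-- The number of `k`-subsets of `V ⊕ Fin (k - 1)` with trace `S` on `V`. -/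
lemma card_filter_toLeft_eq [Fintype V] {k : ℕ} (S : Finset V) (hS : #S ≤ k) :
    #{B : Finset (V ⊕ Fin (k - 1)) | #B = k ∧ B.toLeft = S} = (k - 1).choose (k - #S) := by
  conv_rhs => rw [← Fintype.card_fin (k - 1), ← card_univ, ← card_powersetCard]
  refine card_nbij' (fun B => B.toRight) (fun T => S.disjSum T) ?_ ?_ ?_ ?_
  · intro B hB
    simp only [coe_filter, mem_univ, true_and, Set.mem_ofPred_eq, mem_coe, mem_powersetCard,
      subset_univ] at hB ⊢
    have := B.card_toLeft_add_card_toRight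
    rw [hB.1, hB.2] at this
    omega
  · intro T hT
    simp only [coe_filter, mem_univ, true_and, Set.mem_ofPred_eq, mem_coe, mem_powersetCard,
      subset_univ, card_disjSum, toLeft_disjSum, and_true] at hT ⊢
    omega
  · intro B hB
    simp only [coe_filter, mem_univ, true_and, Set.mem_ofPred_eq] at hB
    simp only [← hB.2, toLeft_disjSum_toRight]
  · intro T _
    simp

/-- A bijection from `k`-multisets on `V` to `k`-subsets of `V ⊕ Fin (k - 1)` under which the
support of a multiset is the trace of its image on `V`. -/
lemma exists_equiv_sym_toLeft_eq [Fintype V] (k : ℕ) :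
    ∃ e : Sym V k ≃ {B : Finset (V ⊕ Fin (k - 1)) // #B = k},
      ∀ s, (e s).1.toLeft = (s : Multiset V).toFinset := by
  have hfib : ∀ S : Finset V, Fintype.card {s : Sym V k // (s : Multiset V).toFinset = S}
      = Fintype.card {B : {B : Finset (V ⊕ Fin (k - 1)) // #B = k} // B.1.toLeft = S} := by
    intro S
    rw [Fintype.card_congr (Equiv.subtypeSubtypeEquivSubtypeInter
      (fun B : Finset (V ⊕ Fin (k - 1)) => #B = k) (fun B => B.toLeft = S)),
      Fintype.card_subtype, Fintype.card_subtype]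
    by_cases hS : #S ≤ k
    · rw [card_sym_filter_toFinset_eq S hS, card_filter_toLeft_eq S hS]
    · rw [filter_false_of_mem, filter_false_of_mem]
      · simp
      · rintro B - ⟨hB, rfl⟩
        exact hS (B.card_toLeft_le.trans_eq hB)
      · rintro s - rfl
        exact hS ((Multiset.toFinset_card_le _).trans_eq s.2)
  refine ⟨Equiv.ofFiberEquiv (f := fun s : Sym V k => (s : Multiset V).toFinset)
    (g := fun B : {B : Finset (V ⊕ Fin (k - 1)) // #B = k} => B.1.toLeft)
    fun S => Fintype.equivOfCardEq (hfib S), fun s => ?_⟩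
  exact Equiv.ofFiberEquiv_map (f := fun s : Sym V k => (s : Multiset V).toFinset)
    (g := fun B : {B : Finset (V ⊕ Fin (k - 1)) // #B = k} => B.1.toLeft) _ s

/-- The number of `k`-multisets containing a fixed element. -/
lemma card_sym_filter_mem [Fintype V] {k : ℕ} (hk : 0 < k) (x : V) :
    #{s : Sym V k | x ∈ s} = (Fintype.card V + k - 2).choose (k - 1) := by
  obtain ⟨l, rfl⟩ : ∃ l, k = l + 1 := ⟨k - 1, by omega⟩
  have h : Fintype.card (Sym V l) = (Fintype.card V + (l + 1) - 2).choose (l + 1 - 1) := by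
    rw [Sym.card_sym_eq_choose]; rfl
  rw [← h, ← card_univ]
  symm
  refine card_nbij (fun t => x ::ₛ t) ?_ ?_ ?_
  · intro t _
    simp
  · intro t _ t' _ h
    simpa using h
  · intro s hs
    simp only [coe_filter, mem_univ, true_and, Set.mem_ofPred_eq] at hs
    exact ⟨s.erase x hs, by simp, Sym.cons_erase hs⟩

/-- If `m > k + 1` and `A` is an intersecting collection of `k`-multisets from `{1,…,m}`,
then `|A| = C(m+k-2, k-1)` iff `A` is the collection of all `k`-multisets containing
some fixed element `x`. -/
theorem stmt_2 (k m : ℕ) (hk : 0 < k) (hm : 0 < m) (h : k + 1 < m)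
    (A : Finset (Sym (Fin m) k))
    (hint : ∀ s ∈ A, ∀ t ∈ A, ∃ x : Fin m, x ∈ s ∧ x ∈ t) :
    A.card = (m + k - 2).choose (k - 1) ↔
      ∃ x : Fin m, A = Finset.univ.filter (fun s : Sym (Fin m) k => x ∈ s) := by
  constructor
  · intro hcard
    obtain ⟨e, he⟩ := exists_equiv_sym_toLeft_eq (V := Fin m) k
    have hsupp : ∀ s v, Sum.inl v ∈ (e s).1 ↔ v ∈ s := fun s v => by
      rw [← mem_toLeft, he, Multiset.mem_toFinset, Sym.mem_coe]
    let F : Finset (Finset (Fin m ⊕ Fin (k - 1))) :=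
      A.map (e.toEmbedding.trans (Function.Embedding.subtype _))
    have hmemF : ∀ s, (e s).1 ∈ F ↔ s ∈ A := fun s =>
      mem_map' (e.toEmbedding.trans (Function.Embedding.subtype _))
    have hV : Fintype.card (Fin m ⊕ Fin (k - 1)) = m + (k - 1) := by simp
    have hFk : ∀ G ∈ F, #G = k := by
      intro G hG
      obtain ⟨s, -, rfl⟩ := mem_map.1 hG
      exact (e s).2
    have hF : (F : Set (Finset (Fin m ⊕ Fin (k - 1)))).Intersecting := by
      intro B hB C hC
      obtain ⟨s, hs, rfl⟩ := mem_map.1 hB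
      obtain ⟨t, ht, rfl⟩ := mem_map.1 hC
      obtain ⟨v, hvs, hvt⟩ := hint s hs t ht
      exact not_disjoint_iff.2 ⟨.inl v, (hsupp s v).2 hvs, (hsupp t v).2 hvt⟩
    obtain ⟨x, hx⟩ := exists_forall_mem_iff_of_intersecting_of_card_eq hk (by omega) hF hFk
      (by rw [card_map, hcard, hV]; congr 1; omega)
    rcases x with x | j
    · refine ⟨x, ?_⟩
      ext s
      rw [← hmemF, hx, hsupp]
      simp [(e s).2]
    · have hsingle : ∀ v : Fin m, ∃ s ∈ A, ∀ u, u ∈ s → u = v := by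
        intro v
        let B : Finset (Fin m ⊕ Fin (k - 1)) := ({v} : Finset (Fin m)).disjSum univ
        have hB : #B = k := by simp [B]; omega
        refine ⟨e.symm ⟨B, hB⟩, ?_, fun u hu => ?_⟩
        · rw [← hmemF, Equiv.apply_symm_apply, hx]
          exact ⟨hB, by simp [B]⟩
        · rw [← hsupp, Equiv.apply_symm_apply] at hu
          simpa [B] using hu
      obtain ⟨s, hs, hs'⟩ := hsingle ⟨0, by omega⟩
      obtain ⟨t, ht, ht'⟩ := hsingle ⟨1, by omega⟩
      obtain ⟨v, hvs, hvt⟩ := hint s hs t ht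
      have := (hs' v hvs).symm.trans (ht' v hvt)
      simp at this
  · rintro ⟨x, rfl⟩
    rw [card_sym_filter_mem hk, Fintype.card_fin]
end

section
/- Let k and m be positive integers with m ≤ k and m odd. If A is an intersecting collection of k-multisets on {1,…,m}, then |A| ≤ |M_{(>m/2)}|, where M_{(>m/2)} is the collection of all k-multisets on {1,…,m} containing more than m/2 distinct elements. Moreover, equality holds if and only if A = M_{(>m/2)}. -/
open Finset

namespace Nat

/-- Below the middle, binomial coefficients increase strictly along a row. -/
theorem choose_lt_choose_of_lt_of_two_mul_le {n a b : ℕ} (hab : a < b) (hb : 2 * b ≤ n) :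
    n.choose a < n.choose b := by
  induction b, hab using Nat.le_induction with
  | base =>
    have h := Nat.choose_succ_right_eq n a
    have hpos : 0 < n.choose a := Nat.choose_pos (by omega)
    by_contra! hle
    have h₁ : n.choose (a + 1) * (a + 1) ≤ n.choose a * (a + 1) := Nat.mul_le_mul_right _ hle
    have h₂ : n.choose a * (a + 1) < n.choose a * (n - a) :=
      Nat.mul_lt_mul_of_pos_left (by omega) hpos
    omega
  | succ b hab ih =>
    exact (ih (by omega)).trans_le (Nat.choose_le_succ_of_lt_half_left (by omega))

theorem choose_lt_choose_of_lt_of_add_lt {n a b : ℕ} (hab : a < b) (h : a + b < n) :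
    n.choose a < n.choose b := by
  rcases le_total (2 * b) n with hb | hb
  · exact choose_lt_choose_of_lt_of_two_mul_le hab hb
  · rw [← Nat.choose_symm (show b ≤ n by omega)]
    exact choose_lt_choose_of_lt_of_two_mul_le (by omega) (by omega)

end Nat

namespace Finset

variable {α : Type*} [DecidableEq α]

theorem card_sym (T : Finset α) (n : ℕ) : #(T.sym n) = (#T).multichoose n := by
  have h := sym_map (n := n) (Function.Embedding.subtype (· ∈ T)) univ
  rw [univ_eq_attach, attach_map_val] at h
  rw [h, card_map, ← univ_eq_attach, sym_univ, card_univ, Sym.card_sym_eq_multichoose,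
    Fintype.card_coe]

/-- There are `(k - 1).choose (#T - 1)` multisets of cardinality `k` with support `T`. -/
theorem card_sym_filter_toFinset_eq [Fintype α] {T : Finset α} {k : ℕ} (hT : T.Nonempty)
    (hk : #T ≤ k) :
    #{s : Sym α k | (s : Multiset α).toFinset = T} = (k - 1).choose (#T - 1) := by
  have hT' := hT.card_pos
  have hcount : (#T).multichoose (k - #T) = (k - 1).choose (#T - 1) := by
    rw [Nat.multichoose_eq, ← Nat.choose_symm (by omega)]
    congr 1 <;> omega
  rw [← hcount, ← card_sym]
  symm
  refine card_bij (fun s _ => Sym.mk ((s : Multiset α) + T.val)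
    (by rw [Multiset.card_add, Sym.card_coe, card_val]; omega)) ?_ ?_ ?_
  · intro s hs
    rw [mem_sym_iff] at hs
    rw [mem_filter_univ, Sym.coe_mk]
    ext x
    simpa using hs x
  · intro s _ t _ h
    simpa using congrArg Subtype.val h
  · intro t ht
    rw [mem_filter_univ] at ht
    have hle : T.val ≤ (t : Multiset α) := by
      rw [← ht]
      exact Multiset.dedup_le _
    refine ⟨Sym.mk ((t : Multiset α) - T.val)
      (by rw [Multiset.card_sub hle, Sym.card_coe, card_val]), ?_, ?_⟩
    · rw [mem_sym_iff]
      intro x hx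
      rw [← ht, Multiset.mem_toFinset]
      exact Multiset.mem_of_le (Multiset.sub_le_self _ _) hx
    · exact Subtype.ext (tsub_add_cancel_of_le hle)

/-- A support smaller than its complement carries strictly fewer `k`-multisets. -/
theorem card_sym_filter_toFinset_lt_compl [Fintype α] {T : Finset α} {k : ℕ} (hT : T.Nonempty)
    (hk : Fintype.card α ≤ k) (hlt : 2 * #T < Fintype.card α) :
    #{s : Sym α k | (s : Multiset α).toFinset = T} <
      #{s : Sym α k | (s : Multiset α).toFinset = Tᶜ} := by
  have hpos := hT.card_pos
  have hc := card_compl T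
  rw [card_sym_filter_toFinset_eq hT (by omega),
    card_sym_filter_toFinset_eq (card_pos.mp (by omega)) (by omega)]
  exact Nat.choose_lt_choose_of_lt_of_add_lt (by omega) (by omega)

/-- In an intersecting family, the members with small support are outnumbered by the multisets
with large support missing from the family. -/
theorem card_sdiff_lt_card_sdiff_of_intersecting [Fintype α] {k : ℕ}
    (hcard : Odd (Fintype.card α)) (hk : Fintype.card α ≤ k) {A : Finset (Sym α k)}
    (hA : ∀ s ∈ A, ∀ t ∈ A, ∃ x, x ∈ s ∧ x ∈ t) {M : Finset (Sym α k)}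
    (hM : ∀ s, s ∈ M ↔ Fintype.card α < 2 * #(s : Multiset α).toFinset)
    (hne : (A \ M).Nonempty) : #(A \ M) < #(M \ A) := by
  let supp : Sym α k → Finset α := fun s => (s : Multiset α).toFinset
  have hsmall : ∀ s ∈ A \ M, 2 * #(supp s) < Fintype.card α := by
    intro s hs
    have h := (mem_sdiff.mp hs).2
    rw [hM] at h
    obtain ⟨r, hr⟩ := hcard
    grind
  have hfib : ∀ T ∈ (A \ M).image supp,
      #{s ∈ A \ M | supp s = T} < #{s ∈ M \ A | (supp s)ᶜ = T} := by
    intro T hT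
    obtain ⟨s, hs, rfl⟩ := mem_image.mp hT
    have hsA := (mem_sdiff.mp hs).1
    have hnonempty : (supp s).Nonempty := by
      obtain ⟨x, hx, -⟩ := hA s hsA s hsA
      exact ⟨x, Multiset.mem_toFinset.mpr hx⟩
    refine lt_of_le_of_lt (card_le_card (filter_subset_filter _ (subset_univ _)))
      ((card_sym_filter_toFinset_lt_compl hnonempty hk (hsmall s hs)).trans_le
        (card_le_card fun t ht => ?_))
    have ht' : supp t = (supp s)ᶜ := (mem_filter_univ t).mp ht
    refine mem_filter.mpr ⟨mem_sdiff.mpr ⟨(hM t).mpr ?_, fun htA => ?_⟩, by rw [ht', compl_compl]⟩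
    · have h₁ := hsmall s hs
      have h₂ := card_compl (supp s)
      rw [← ht'] at h₂
      change _ < 2 * #(supp t)
      omega
    · obtain ⟨x, hxs, hxt⟩ := hA s hsA t htA
      have hx : x ∈ supp t := Multiset.mem_toFinset.mpr hxt
      rw [ht', mem_compl] at hx
      exact hx (Multiset.mem_toFinset.mpr hxs)
  calc #(A \ M) = ∑ T ∈ (A \ M).image supp, #{s ∈ A \ M | supp s = T} :=
        card_eq_sum_card_image _ _
    _ < ∑ T ∈ (A \ M).image supp, #{s ∈ M \ A | (supp s)ᶜ = T} :=
        sum_lt_sum_of_nonempty (hne.image _) hfib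
    _ ≤ ∑ T, #{s ∈ M \ A | (supp s)ᶜ = T} := sum_le_univ_sum_of_nonneg fun _ => Nat.zero_le _
    _ = #(M \ A) := (card_eq_sum_card_fiberwise fun _ _ => mem_coe.mpr (mem_univ _)).symm

end Finset


/-- For `m ≤ k` with `m` odd, an intersecting collection `A` of `k`-multisets on `{1,…,m}`
satisfies `|A| ≤ |M_{(>m/2)}|`, with equality iff `A = M_{(>m/2)}`, where `M_{(>m/2)}`
is the collection of all `k`-multisets whose support has more than `m/2` elements. -/
theorem stmt_4 (k m : ℕ) (hk : 0 < k) (hm : 0 < m) (hmk : m ≤ k) (hodd : Odd m)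
    (A : Finset (Sym (Fin m) k))
    (hint : ∀ s ∈ A, ∀ t ∈ A, ∃ x : Fin m, x ∈ s ∧ x ∈ t) :
    A.card ≤ (Finset.univ.filter
        (fun s : Sym (Fin m) k => m < 2 * (s : Multiset (Fin m)).toFinset.card)).card ∧
    (A.card = (Finset.univ.filter
        (fun s : Sym (Fin m) k => m < 2 * (s : Multiset (Fin m)).toFinset.card)).card ↔
      A = Finset.univ.filter
        (fun s : Sym (Fin m) k => m < 2 * (s : Multiset (Fin m)).toFinset.card)) := by
  set M := Finset.univ.filter
    (fun s : Sym (Fin m) k => m < 2 * (s : Multiset (Fin m)).toFinset.card) with hM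
  have hA := card_inter_add_card_sdiff A M
  have hM' := card_inter_add_card_sdiff M A
  rw [inter_comm] at hM'
  rcases (A \ M).eq_empty_or_nonempty with h | h
  · have hsub : A ⊆ M := sdiff_eq_empty_iff_subset.mp h
    exact ⟨card_le_card hsub, fun heq => eq_of_subset_of_card_le hsub heq.ge,
      fun heq => by rw [heq]⟩
  · have hlt : #(A \ M) < #(M \ A) :=
      card_sdiff_lt_card_sdiff_of_intersecting (by simpa using hodd) (by simpa using hmk) hint
        (by simp [hM]) h
    exact ⟨by omega, fun heq => by omega, fun heq => by rw [heq]⟩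
end

section
/- Let k and m be positive integers and let n = m + k − 1. There exists a bijection f from the k-element subsets of {1,…,n} to the k-multisets on {1,…,m} such that for every k-subset B of {1,…,n}, the set of distinct elements (support) of f(B) equals B ∩ {1,…,m}. -/
open Finset in
/-- The finsets of `α ⊕ β` of cardinality `k` whose left part is `s` are determined by their right
part, an arbitrary finset of `β` of cardinality `k - #s`. -/
theorem Finset.natCard_card_eq_and_toLeft_eq {α β : Type*} [Fintype β]
    (s : Finset α) {k : ℕ} (hs : #s ≤ k) :
    Nat.card {B : {B : Finset (α ⊕ β) // #B = k} // B.1.toLeft = s} =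
      (Fintype.card β).choose (k - #s) := by
  rw [← Fintype.card_finset_len (α := β) (k - #s), ← Nat.card_eq_fintype_card]
  refine (Nat.card_eq_of_bijective (fun t ↦ ⟨⟨s.disjSum t.1, by
    rw [card_disjSum, t.2, Nat.add_sub_cancel' hs]⟩, by simp⟩) ⟨?_, ?_⟩).symm
  · intro t t' h
    simpa [Subtype.ext_iff] using h
  · rintro ⟨⟨B, hB⟩, rfl⟩
    refine ⟨⟨B.toRight, ?_⟩, ?_⟩
    · have := card_toLeft_add_card_toRight (u := B)
      dsimp only
      omega
    · simp [toLeft_disjSum_toRight]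

open Finset in
/-- The multisets of cardinality `k` with support `s` are obtained from the multisets of
cardinality `k - #s` on `s` by adding one copy of each element of `s`. -/
theorem Sym.natCard_toFinset_eq {α : Type*} [DecidableEq α]
    (s : Finset α) {k : ℕ} (hs : #s ≤ k) :
    Nat.card {t : Sym α k // (t : Multiset α).toFinset = s} = (#s).multichoose (k - #s) := by
  have hcard : Nat.card (Sym s (k - #s)) = (#s).multichoose (k - #s) := by
    rw [Sym.natCard_sym_eq_multichoose, Nat.card_eq_fintype_card, Fintype.card_coe]
  rw [← hcard]
  have hsupp (t : Sym s (k - #s)) :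
      ((t : Multiset s).map Subtype.val + s.val).toFinset = s := by
    ext a
    simp only [Multiset.mem_toFinset, Multiset.mem_add, Multiset.mem_map, mem_val]
    exact ⟨fun h ↦ h.elim (fun ⟨x, _, hx⟩ ↦ hx ▸ x.2) id, Or.inr⟩
  refine (Nat.card_eq_of_bijective
    (fun t ↦ ⟨⟨(t : Multiset s).map Subtype.val + s.val, by simp [hs]⟩, hsupp t⟩) ⟨?_, ?_⟩).symm
  · intro t t' h
    have h' := congrArg (fun u ↦ (u.1 : Multiset α)) h
    exact Sym.coe_injective
      (Multiset.map_injective Subtype.val_injective (add_right_cancel h'))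
  · rintro ⟨⟨t, ht⟩, rfl⟩
    have hle : t.toFinset.val ≤ t := Multiset.dedup_le t
    have hmem : ∀ a ∈ t - t.toFinset.val, a ∈ t.toFinset := fun a ha ↦
      Multiset.mem_toFinset.2 (Multiset.mem_of_le (Multiset.sub_le_self _ _) ha)
    refine ⟨⟨(t - t.toFinset.val).attach.map fun a ↦ ⟨a.1, hmem a.1 a.2⟩, ?_⟩, ?_⟩
    · rw [Multiset.card_map, Multiset.card_attach, Multiset.card_sub hle, ht]
      rfl
    · refine Subtype.ext (Subtype.ext ?_)
      change Multiset.map _ (Multiset.map _ _) + _ = t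
      rw [Multiset.map_map]
      change Multiset.map Subtype.val _ + _ = t
      rw [Multiset.attach_map_val]
      exact Multiset.sub_add_cancel hle

open Finset in
/-- If `β` has `k - 1` elements, the finsets of `α ⊕ β` of cardinality `k` are in bijection with
the multisets on `α` of cardinality `k`, in such a way that left parts correspond to supports. -/
theorem Finset.exists_equiv_sym_toFinset_eq_toLeft {α β : Type*} [Finite α] [DecidableEq α]
    [Fintype β] {k : ℕ} (hβ : Fintype.card β = k - 1) :
    ∃ f : {B : Finset (α ⊕ β) // #B = k} ≃ Sym α k,
      ∀ B, (f B : Multiset α).toFinset = B.1.toLeft := by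
  have := Fintype.ofFinite α
  have hfiber (s : Finset α) :
      Nonempty ({B : {B : Finset (α ⊕ β) // #B = k} // B.1.toLeft = s} ≃
        {t : Sym α k // (t : Multiset α).toFinset = s}) := by
    by_cases hs : #s ≤ k
    · refine Finite.card_eq.1 ?_
      rw [natCard_card_eq_and_toLeft_eq s hs, Sym.natCard_toFinset_eq s hs, hβ,
        Nat.multichoose_eq, Nat.add_sub_cancel' hs]
    · have : IsEmpty {B : {B : Finset (α ⊕ β) // #B = k} // B.1.toLeft = s} :=
        ⟨fun B ↦ hs (B.2 ▸ card_toLeft_le.trans_eq B.1.2)⟩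
      have : IsEmpty {t : Sym α k // (t : Multiset α).toFinset = s} :=
        ⟨fun t ↦ hs (t.2 ▸ (Multiset.toFinset_card_le _).trans_eq t.1.2)⟩
      exact ⟨Equiv.equivOfIsEmpty _ _⟩
  exact ⟨Equiv.ofFiberEquiv fun s ↦ (hfiber s).some, fun B ↦
    Equiv.ofFiberEquiv_map (g := fun t : Sym α k ↦ (t : Multiset α).toFinset) _ B⟩

/-- Let `n = m + k - 1`. There is a bijection `f` from the `k`-subsets of `{1,…,n}`
to the `k`-multisets on `{1,…,m}` such that the support of `f B` equals `B ∩ {1,…,m}`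
(where `{1,…,m}` is regarded as the first `m` elements of `{1,…,n}`). -/
theorem stmt_11 (k m n : ℕ) (hk : 0 < k) (hm : 0 < m) (hn : n = m + k - 1) :
    ∃ f : {B : Finset (Fin n) // B.card = k} ≃ Sym (Fin m) k,
      ∀ B : {B : Finset (Fin n) // B.card = k},
        ((f B : Multiset (Fin m)).toFinset.map
            (Fin.castLEEmb (show m ≤ n by omega))
          = B.1 ∩ Finset.univ.filter (fun x : Fin n => (x : ℕ) < m)) := by
  obtain ⟨f, hf⟩ := Finset.exists_equiv_sym_toFinset_eq_toLeft (α := Fin m) (β := Fin (k - 1))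
    (k := k) (Fintype.card_fin _)
  let e : Fin n ≃ Fin m ⊕ Fin (k - 1) :=
    (finCongr (by omega : n = m + (k - 1))).trans finSumFinEquiv.symm
  refine ⟨(e.finsetCongr.subtypeEquiv fun B ↦ by simp).trans f, fun B ↦ ?_⟩
  have he (B : Finset (Fin n)) (a : Fin m) :
      Sum.inl a ∈ B.map e.toEmbedding ↔ Fin.castLE (by omega) a ∈ B := Finset.mem_map_equiv
  ext x
  simp only [Equiv.trans_apply, hf, Equiv.subtypeEquiv_apply, Equiv.finsetCongr_apply,
    Finset.mem_inter, Finset.mem_filter, Finset.mem_univ, true_and]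
  rw [Finset.mem_map]
  simp only [Finset.mem_toLeft, he, Fin.castLEEmb_apply]
  constructor
  · rintro ⟨a, ha, rfl⟩
    exact ⟨ha, a.2⟩
  · rintro ⟨hx, hlt⟩
    exact ⟨⟨x, hlt⟩, hx, rfl⟩
end

section
/- Let k and m be positive integers with 2 < m ≤ k. If A is an intersecting collection of k-multisets on {1,…,m} of maximum possible cardinality among all intersecting collections of k-multisets on {1,…,m}, then every multiset in A has at least m/2 distinct elements. -/
open Finset

theorem Nat.choose_lt_choose_of_lt_of_two_mul_le_s17 {n a b : ℕ} (hab : a < b) (hb : 2 * b ≤ n) :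
    n.choose a < n.choose b := by
  have step : ∀ r, 2 * (r + 1) ≤ n → n.choose r < n.choose (r + 1) := by
    intro r hr
    have hpos : 0 < n.choose r := Nat.choose_pos (by omega)
    have hrec := Nat.choose_succ_right_eq n r
    have hlt : n.choose r * (r + 1) < n.choose r * (n - r) :=
      Nat.mul_lt_mul_of_pos_left (by omega) hpos
    exact lt_of_mul_lt_mul_right (hrec ▸ hlt) (Nat.zero_le (r + 1))
  induction b, hab using Nat.le_induction with
  | base => exact step a hb
  | succ c _ ih => exact (ih (by omega)).trans (step c hb)

theorem Nat.choose_lt_choose_of_add_lt {n a b : ℕ} (hab : a < b) (hn : a + b < n) :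
    n.choose a < n.choose b := by
  rcases le_total (2 * b) n with h | h
  · exact Nat.choose_lt_choose_of_lt_of_two_mul_le_s17 hab h
  · rw [← Nat.choose_symm (show b ≤ n by omega)]
    exact Nat.choose_lt_choose_of_lt_of_two_mul_le_s17 (by omega) (by omega)

/-- The number of `k`-multisets whose support is exactly `S`. -/
theorem Sym.card_filter_toFinset_eq {α : Type*} [Fintype α] [DecidableEq α] {k : ℕ}
    (S : Finset α) (hS : S.Nonempty) (hk : #S ≤ k) :
    #{s : Sym α k | (s : Multiset α).toFinset = S} = (k - 1).choose (#S - 1) := by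
  have hpos := hS.card_pos
  have hcard : Fintype.card (Sym S (k - #S)) = (k - 1).choose (#S - 1) := by
    rw [Sym.card_sym_eq_choose, Fintype.card_coe, ← Nat.choose_symm (by omega)]
    congr 1 <;> omega
  rw [← hcard, ← Finset.card_univ]
  symm
  refine Finset.card_bij
    (fun u _ => Sym.mk ((u : Multiset S).map Subtype.val + S.val) (by
      rw [Multiset.card_add, Multiset.card_map, Sym.card_coe, Finset.card_val]; omega))
    ?_ ?_ ?_
  · intro u _
    simp only [mem_filter, mem_univ, true_and, Sym.coe_mk]
    ext x
    simp +contextual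
  · intro u _ v _ huv
    have h := congrArg Subtype.val huv
    exact Subtype.ext (Multiset.map_injective Subtype.val_injective (add_right_cancel h))
  · intro s hs
    simp only [mem_filter, mem_univ, true_and] at hs
    have hle : S.val ≤ (s : Multiset α) := hs ▸ Multiset.dedup_le _
    have hmem : ∀ x ∈ (s : Multiset α) - S.val, x ∈ S := fun x hx =>
      hs ▸ Multiset.mem_toFinset.2 (Multiset.mem_of_le (Multiset.sub_le_self _ _) hx)
    obtain ⟨u, hu⟩ : ∃ u : Multiset S, u.map Subtype.val = (s : Multiset α) - S.val :=
      CanLift.prf _ hmem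
    refine ⟨Sym.mk u ?_, mem_univ _, ?_⟩
    · rw [← Multiset.card_map Subtype.val u, hu, Multiset.card_sub hle, Sym.card_coe,
        Finset.card_val]
    · apply Subtype.ext
      change u.map Subtype.val + S.val = _
      rw [hu, Multiset.sub_add_cancel hle]
      rfl

/-- A small support carries fewer `k`-multisets than its complement. -/
theorem Sym.card_filter_toFinset_eq_lt_compl {k m : ℕ} (hmk : m ≤ k) (S : Finset (Fin m))
    (hS : S.Nonempty) (hsmall : 2 * #S < m) :
    #{s : Sym (Fin m) k | (s : Multiset (Fin m)).toFinset = S} <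
      #{s : Sym (Fin m) k | (s : Multiset (Fin m)).toFinset = Sᶜ} := by
  have hpos := hS.card_pos
  have hc : #Sᶜ = m - #S := by rw [Finset.card_compl, Fintype.card_fin]
  rw [Sym.card_filter_toFinset_eq S hS (by omega),
    Sym.card_filter_toFinset_eq Sᶜ (Finset.card_pos.1 (by omega)) (by omega), hc]
  exact Nat.choose_lt_choose_of_add_lt (by omega) (by omega)

/-- For `2 < m ≤ k`, if `A` is an intersecting collection of `k`-multisets on `{1,…,m}`
of maximum possible cardinality, then every multiset in `A` has at least `m/2`
distinct elements. -/
theorem stmt_17 (k m : ℕ) (hm : 2 < m) (hmk : m ≤ k)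
    (A : Finset (Sym (Fin m) k))
    (hint : ∀ s ∈ A, ∀ t ∈ A, ∃ x : Fin m, x ∈ s ∧ x ∈ t)
    (hmax : ∀ B : Finset (Sym (Fin m) k),
      (∀ s ∈ B, ∀ t ∈ B, ∃ x : Fin m, x ∈ s ∧ x ∈ t) → B.card ≤ A.card) :
    ∀ s ∈ A, m ≤ 2 * (s : Multiset (Fin m)).toFinset.card := by
  by_contra! hex
  obtain ⟨s₀, hs₀, hlt₀⟩ := hex
  let supp : Sym (Fin m) k → Finset (Fin m) := fun s => (s : Multiset (Fin m)).toFinset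
  have mem_supp : ∀ {x : Fin m} {s : Sym (Fin m) k}, x ∈ supp s ↔ x ∈ s :=
    Multiset.mem_toFinset
  let small : Finset (Sym (Fin m) k) := {s ∈ A | 2 * #(supp s) < m}
  let rest : Finset (Sym (Fin m) k) := {s ∈ A | ¬ 2 * #(supp s) < m}
  let large : Finset (Sym (Fin m) k) := {s | (supp s)ᶜ ∈ small.image supp}
  have hcompl : ∀ S : Finset (Fin m), #Sᶜ + #S = m := fun S => by
    rw [Finset.card_compl_add_card, Fintype.card_fin]
  have hlarge : ∀ t ∈ large, m < 2 * #(supp t) ∧ t ∉ A := by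
    intro t ht
    obtain ⟨s, hs, hst⟩ := Finset.mem_image.1 (Finset.mem_filter.1 ht).2
    obtain ⟨hsA, hs⟩ := Finset.mem_filter.1 hs
    have := hcompl (supp t)
    refine ⟨by rw [← hst] at this; omega, fun htA => ?_⟩
    obtain ⟨x, hxs, hxt⟩ := hint s hsA t htA
    exact Finset.mem_compl.1 (hst ▸ mem_supp.2 hxs) (mem_supp.2 hxt)
  have hmeet : ∀ s t : Sym (Fin m) k, m < #(supp s) + #(supp t) → ∃ x, x ∈ s ∧ x ∈ t := by
    intro s t hst
    obtain ⟨x, hx⟩ := Finset.inter_nonempty_of_card_lt_card_add_card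
      (Finset.subset_univ (supp s)) (Finset.subset_univ (supp t))
      (by rwa [Finset.card_univ, Fintype.card_fin])
    exact ⟨x, mem_supp.1 (Finset.mem_inter.1 hx).1, mem_supp.1 (Finset.mem_inter.1 hx).2⟩
  have hB := hmax (rest ∪ large) (by
    intro s hs t ht
    rcases Finset.mem_union.1 hs with hs | hs <;> rcases Finset.mem_union.1 ht with ht | ht
    · exact hint s (Finset.mem_filter.1 hs).1 t (Finset.mem_filter.1 ht).1
    · have := (Finset.mem_filter.1 hs).2
      have := (hlarge t ht).1
      exact hmeet s t (by omega)
    · have := (Finset.mem_filter.1 ht).2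
      have := (hlarge s hs).1
      exact hmeet s t (by omega)
    · have := (hlarge s hs).1
      have := (hlarge t ht).1
      exact hmeet s t (by omega))
  have hdisj : Disjoint rest large := Finset.disjoint_left.2 fun t ht ht' =>
    (hlarge t ht').2 (Finset.mem_filter.1 ht).1
  have hA : #small + #rest = #A := Finset.card_filter_add_card_filter_not _
  rw [Finset.card_union_of_disjoint hdisj] at hB
  have hsum : #small < #large := calc
    #small = ∑ S ∈ small.image supp, #{s ∈ small | supp s = S} :=
      Finset.card_eq_sum_card_image supp small
    _ ≤ ∑ S ∈ small.image supp, #{s | supp s = S} :=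
      Finset.sum_le_sum fun S _ =>
        Finset.card_le_card (Finset.filter_subset_filter _ (Finset.subset_univ _))
    _ < ∑ S ∈ small.image supp, #{s | supp s = Sᶜ} := by
      refine Finset.sum_lt_sum_of_nonempty
        ⟨supp s₀, Finset.mem_image_of_mem _ (Finset.mem_filter.2 ⟨hs₀, hlt₀⟩)⟩ fun S hS => ?_
      obtain ⟨s, hs, rfl⟩ := Finset.mem_image.1 hS
      have hne : (supp s).Nonempty := by
        obtain ⟨x, hx, -⟩ := hint s (Finset.mem_filter.1 hs).1 s (Finset.mem_filter.1 hs).1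
        exact ⟨x, mem_supp.2 hx⟩
      exact Sym.card_filter_toFinset_eq_lt_compl hmk (supp s) hne (Finset.mem_filter.1 hs).2
    _ = #large := by
      rw [Finset.card_eq_sum_card_fiberwise (f := fun s => (supp s)ᶜ) (s := large)
        (t := small.image supp) fun s hs => (Finset.mem_filter.1 hs).2]
      refine Finset.sum_congr rfl fun S hS => congrArg Finset.card ?_
      ext s
      simp only [Finset.mem_filter, Finset.mem_univ, true_and, large, eq_compl_comm (x := supp s),
        eq_comm (a := S)]
      exact ⟨fun h => ⟨h ▸ hS, h⟩, fun h => h.2⟩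
  omega
end

section
/- Let m be a positive even integer. The maximum cardinality of an intersecting family of (m/2)-element subsets of {1,…,m} is (1/2)·C(m, m/2). -/
open Finset in
/-- For `m` even and positive, the maximum cardinality of an intersecting family of
`(m/2)`-subsets of `{1,…,m}` is `(1/2)·C(m, m/2)` (stated multiplied through by 2):
some intersecting family attains it and no intersecting family exceeds it. -/
theorem stmt_18 (m : ℕ) (hm : 0 < m) (heven : Even m) :
    (∃ F : Finset (Finset (Fin m)),
      (∀ s ∈ F, s.card = m / 2) ∧
      (∀ s ∈ F, ∀ t ∈ F, (s ∩ t).Nonempty) ∧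
      2 * F.card = m.choose (m / 2)) ∧
    (∀ F : Finset (Finset (Fin m)),
      (∀ s ∈ F, s.card = m / 2) →
      (∀ s ∈ F, ∀ t ∈ F, (s ∩ t).Nonempty) →
      2 * F.card ≤ m.choose (m / 2)) := by
  obtain ⟨k, rfl⟩ := heven
  have hk : (k + k) / 2 = k := by omega
  rw [hk]
  refine ⟨⟨{s ∈ powersetCard k (univ : Finset (Fin (k + k))) | ⟨0, hm⟩ ∈ s}, fun s hs ↦ ?_,
    fun s hs t ht ↦ ?_, ?_⟩, fun F hF hint ↦ ?_⟩
  · exact (mem_powersetCard.1 (mem_filter.1 hs).1).2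
  · exact ⟨⟨0, hm⟩, mem_inter.2 ⟨(mem_filter.1 hs).2, (mem_filter.1 ht).2⟩⟩
  · have hcompl : #{s ∈ powersetCard k (univ : Finset (Fin (k + k))) | ⟨0, hm⟩ ∈ s} =
        #{s ∈ powersetCard k (univ : Finset (Fin (k + k))) | ⟨0, hm⟩ ∉ s} := by
      refine card_nbij' compl compl ?_ ?_ ?_ ?_ <;> intro s <;>
        simp +contextual [mem_powersetCard, card_compl]
    have hsplit := card_filter_add_card_filter_not
      (s := powersetCard k (univ : Finset (Fin (k + k)))) (fun s ↦ ⟨0, hm⟩ ∈ s)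
    rw [card_powersetCard, card_univ, Fintype.card_fin] at hsplit
    omega
  · have hdisj : Disjoint F (F.image compl) := by
      refine disjoint_left.2 fun s hs hs' ↦ ?_
      obtain ⟨t, ht, rfl⟩ := mem_image.1 hs'
      simpa using hint t ht _ hs
    have hsub : F ∪ F.image compl ⊆ powersetCard k univ := by
      refine union_subset (fun s hs ↦ ?_) (image_subset_iff.2 fun s hs ↦ ?_) <;>
        simp [mem_powersetCard, card_compl, hF s hs]
    have hcard := card_le_card hsub
    rw [card_union_of_disjoint hdisj, card_image_of_injective _ compl_injective,
      card_powersetCard, card_univ, Fintype.card_fin] at hcard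
    omega
end
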